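/- Let n ≥ 1 and let a ∈ T_n∖S_n be a singular transformation. Then the semigroup S = ⟨a^g | g ∈ S_n⟩ is idempotent generated and regular. -/

import Mathlib

/-!
Write `S = ⟨aᵍ | g ∈ Sₙ⟩`. Finite transformation semigroups are unit regular: `a q a = a` for some
permutation `q`, so `a = e p` with `e = a q` idempotent and `p = q⁻¹`. The product
`a · a^p · a^(p²) ⋯ a^(p^(k-1))` telescopes to `e pᵏ`; at the order of `p` this shows `e ∈ S`.

Conversely, let `E = ⟨eᵍ | g ∈ Sₙ⟩`. If `w` is not fixed by an idempotent `f`, then `f (x w) = f f'`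
for some conjugate `f'` of `f` that does not fix `x`. For `x` and `y` distinct from `w`, using
`(x y) = (x w)(x y)(y w)` and exchanging one transposition at a time gives
`f (x y) = f f₁ f₂ f₃` with conjugates `fᵢ` of `f`. Hence `E` is closed under multiplication by
permutations, so `a = e p ∈ E` and `S = E` is generated by idempotents.

Finally, if `u ∈ S` and `u q u = u` for a permutation `q`, then `q u q ∈ S` satisfies
`u (q u q) u = u`.
-/

open Finset

/-- Transformations of a set `α`, composed left-to-right (acting on the right):
`x (a * b) = (x a) b`. -/
structure Transf (α : Type*) where
  toFun : α → α

namespace Transf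

variable {α : Type*}

instance : Semigroup (Transf α) where
  mul a b := ⟨fun x => b.toFun (a.toFun x)⟩
  mul_assoc _ _ _ := rfl

/-- The transformation induced by a permutation. -/
def ofPerm (g : Equiv.Perm α) : Transf α := ⟨g⟩

/-- The rank of a transformation: the cardinality of its image. -/
noncomputable def rank (a : Transf α) : ℕ := Set.ncard (Set.range a.toFun)

end Transf

/-- The subsemigroup `⟨G, a⟩` generated by `G ∪ {a}`. -/
def genGA {α : Type*} (G : Subgroup (Equiv.Perm α)) (a : Transf α) :
    Subsemigroup (Transf α) :=
  Subsemigroup.closure (insert a (Transf.ofPerm '' (G : Set (Equiv.Perm α))))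

/-- The set `⟨G, a⟩ ∖ G`. -/
def genGAminusG {α : Type*} (G : Subgroup (Equiv.Perm α)) (a : Transf α) :
    Set (Transf α) :=
  (genGA G a : Set (Transf α)) \ (Transf.ofPerm '' (G : Set (Equiv.Perm α)))

/-- The set of conjugates `a^g = g⁻¹ a g` with `g ∈ G`. -/
def conjSet {α : Type*} (G : Subgroup (Equiv.Perm α)) (a : Transf α) : Set (Transf α) :=
  (fun g : Equiv.Perm α => Transf.ofPerm g⁻¹ * a * Transf.ofPerm g) '' (G : Set (Equiv.Perm α))

/-- The subsemigroup `⟨a^g | g ∈ G⟩`. -/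
def genConj {α : Type*} (G : Subgroup (Equiv.Perm α)) (a : Transf α) :
    Subsemigroup (Transf α) :=
  Subsemigroup.closure (conjSet G a)

/-- A subset of the transformation semigroup is regular if every element `u` of it
admits `v` in the set with `u = u v u`. -/
def IsRegularSet {α : Type*} (S : Set (Transf α)) : Prop :=
  ∀ u ∈ S, ∃ v ∈ S, u * v * u = u

/-- A subset of the transformation semigroup is idempotent generated if it coincides with
the subsemigroup generated by its idempotent elements. -/
def IsIdemGen {α : Type*} (S : Set (Transf α)) : Prop :=
  S = ↑(Subsemigroup.closure {u | u ∈ S ∧ u * u = u})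

/-- `T` is a transversal for the partition `P`: it meets each class in exactly one point. -/
def IsTransversal {α : Type*} [DecidableEq α] [Fintype α] (T : Finset α)
    (P : Finpartition (Finset.univ : Finset α)) : Prop :=
  ∀ p ∈ P.parts, (T ∩ p).card = 1

/-- The universal transversal property: for every subset `I` and every partition `P`
with exactly `|I|` classes, some `G`-translate of `I` is a transversal for `P`. -/
def HasUTP {α : Type*} [DecidableEq α] [Fintype α] (G : Subgroup (Equiv.Perm α)) : Prop :=
  ∀ (I : Finset α) (P : Finpartition (Finset.univ : Finset α)),
    P.parts.card = I.card → ∃ g ∈ G, IsTransversal (I.image ⇑g) P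

namespace Transf

variable {α : Type*}

@[ext]
theorem ext {x y : Transf α} (h : ∀ t, x.toFun t = y.toFun t) : x = y :=
  congrArg Transf.mk (funext h)

@[simp]
theorem toFun_mul (x y : Transf α) (t : α) : (x * y).toFun t = y.toFun (x.toFun t) := rfl

@[simp]
theorem toFun_ofPerm (g : Equiv.Perm α) (t : α) : (ofPerm g).toFun t = g t := rfl

theorem ofPerm_mul (g h : Equiv.Perm α) : ofPerm (g * h) = ofPerm h * ofPerm g := rfl

@[simp]
theorem mul_ofPerm_one (x : Transf α) : x * ofPerm 1 = x := rfl

@[simp]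
theorem mul_ofPerm_mul_ofPerm_inv (x : Transf α) (g : Equiv.Perm α) :
    x * ofPerm g * ofPerm g⁻¹ = x := by
  rw [mul_assoc, ← ofPerm_mul, inv_mul_cancel, mul_ofPerm_one]

theorem toFun_toFun_of_isIdempotentElem {e : Transf α} (he : IsIdempotentElem e) (t : α) :
    e.toFun (e.toFun t) = e.toFun t := by
  rw [← toFun_mul, he.eq]

/-- Conjugation `x ↦ xᵍ = g⁻¹ x g` as an endomorphism of the transformation semigroup. -/
def conj (g : Equiv.Perm α) : Transf α →ₙ* Transf α where
  toFun x := ofPerm g⁻¹ * x * ofPerm g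
  map_mul' x y := by ext t; simp

theorem conj_apply (g : Equiv.Perm α) (x : Transf α) :
    conj g x = ofPerm g⁻¹ * x * ofPerm g := rfl

@[simp]
theorem toFun_conj_apply (g : Equiv.Perm α) (x : Transf α) (t : α) :
    (conj g x).toFun (g t) = g (x.toFun t) := by
  simp [conj_apply]

theorem conj_conj (g h : Equiv.Perm α) (x : Transf α) : conj h (conj g x) = conj (h * g) x := by
  simp only [conj_apply, mul_inv_rev, ofPerm_mul, mul_assoc]

theorem exists_mul_ofPerm_mul_self {u : Transf α} (hu : (Set.range u.toFun).Finite) :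
    ∃ q : Equiv.Perm α, u * ofPerm q * u = u := by
  have : Finite (Set.range u.toFun) := hu
  obtain ⟨q, hq⟩ := Equiv.Perm.exists_extending_pair _ _ Subtype.val_injective
    (Set.rangeSplitting_injective u.toFun)
  refine ⟨q, ext fun t => ?_⟩
  have hqt : q (u.toFun t) = Set.rangeSplitting u.toFun ⟨u.toFun t, Set.mem_range_self t⟩ :=
    hq ⟨_, Set.mem_range_self t⟩
  rw [toFun_mul, toFun_mul, toFun_ofPerm, hqt, Set.apply_rangeSplitting u.toFun]

theorem isRegularSet_of_ofPerm_mul_mem [Finite α] {S : Set (Transf α)}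
    (hleft : ∀ g : Equiv.Perm α, ∀ x ∈ S, ofPerm g * x ∈ S)
    (hright : ∀ g : Equiv.Perm α, ∀ x ∈ S, x * ofPerm g ∈ S) : IsRegularSet S := by
  intro u hu
  obtain ⟨q, hq⟩ := exists_mul_ofPerm_mul_self (Set.toFinite (Set.range u.toFun))
  refine ⟨ofPerm q * u * ofPerm q, hright q _ (hleft q u hu), ?_⟩
  calc u * (ofPerm q * u * ofPerm q) * u = u * ofPerm q * u * ofPerm q * u := by
        simp only [mul_assoc]
    _ = u := by rw [hq, hq]

section genConj

variable {G : Subgroup (Equiv.Perm α)} {a b e x : Transf α} {g p : Equiv.Perm α}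

theorem self_mem_genConj : a ∈ genConj G a :=
  Subsemigroup.subset_closure ⟨1, G.one_mem, rfl⟩

theorem conj_mem_genConj (hg : g ∈ G) (hx : x ∈ genConj G a) : conj g x ∈ genConj G a := by
  suffices genConj G a ≤ (genConj G a).comap (conj g) from this hx
  refine Subsemigroup.closure_le.2 ?_
  rintro _ ⟨h, hh, rfl⟩
  exact Subsemigroup.subset_closure ⟨g * h, G.mul_mem hg hh, (conj_conj h g a).symm⟩

theorem genConj_le_genConj (h : a ∈ genConj G b) : genConj G a ≤ genConj G b := by
  refine Subsemigroup.closure_le.2 ?_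
  rintro _ ⟨g, hg, rfl⟩
  exact conj_mem_genConj hg h

theorem isIdemGen_genConj (he : IsIdempotentElem e) :
    IsIdemGen (genConj G e : Set (Transf α)) := by
  refine congrArg _ (le_antisymm (Subsemigroup.closure_mono fun x hx => ?_)
    (Subsemigroup.closure_le.2 fun u hu => hu.1))
  refine ⟨Subsemigroup.subset_closure hx, ?_⟩
  obtain ⟨g, -, rfl⟩ := hx
  exact he.map (conj g)

theorem mul_ofPerm_pow_succ_mem_genConj (he : IsIdempotentElem e) (hp : p ∈ G) (k : ℕ) :
    e * ofPerm (p ^ (k + 1)) ∈ genConj G (e * ofPerm p) := by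
  induction k with
  | zero => simpa using self_mem_genConj
  | succ k ih =>
    have telescope : e * ofPerm (p ^ (k + 1)) * conj (p ^ (k + 1)) (e * ofPerm p) =
        e * ofPerm (p ^ (k + 1 + 1)) := by
      ext t
      simp [toFun_toFun_of_isIdempotentElem he, pow_succ p (k + 1)]
    rw [← telescope]
    exact mul_mem ih (conj_mem_genConj (G.pow_mem hp _) self_mem_genConj)

theorem mem_genConj_mul_ofPerm (he : IsIdempotentElem e) (hp : p ∈ G) (hfin : IsOfFinOrder p) :
    e ∈ genConj G (e * ofPerm p) := by
  have h := mul_ofPerm_pow_succ_mem_genConj he hp (orderOf p - 1)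
  rwa [Nat.sub_add_cancel hfin.orderOf_pos, pow_orderOf_eq_one, mul_ofPerm_one] at h

end genConj

section Swap

variable [DecidableEq α] {e : Transf α} {w : α}

theorem exists_conj_toFun_eq_swap {x : α} (hx : e.toFun x = x) (hw : e.toFun w ≠ w) :
    ∃ g : Equiv.Perm α, ∀ i, e.toFun i = i → (conj g e).toFun i = Equiv.swap x w i := by
  -- `g` sends `w ↦ x` and `e w ↦ w`, so that `conj g e` maps `x` to `w`; the remaining value
  -- `x ↦ e w`, needed when `e w ≠ x`, keeps `e w` fixed by `conj g e`.
  let g := Equiv.swap x w * Equiv.swap (e.toFun w) x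
  have hxw : x ≠ w := by rintro rfl; exact hw hx
  have hgw : g w = x := by simp [g, Equiv.swap_apply_of_ne_of_ne hw.symm hxw.symm]
  have hgew : g (e.toFun w) = w := by simp [g]
  refine ⟨g, fun i hi => ?_⟩
  have hiw : i ≠ w := by rintro rfl; exact hw hi
  by_cases hix : i = x
  · rw [hix, Equiv.swap_apply_left, ← hgw, toFun_conj_apply, hgew]
  rw [Equiv.swap_apply_of_ne_of_ne hix hiw]
  by_cases hiew : i = e.toFun w
  · have hgx : g x = i := by
      simp [g, ← hiew, Equiv.swap_apply_of_ne_of_ne hix hiw]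
    rw [← hgx, toFun_conj_apply, hx]
  · have hgi : g i = i := by
      simp [g, Equiv.swap_apply_of_ne_of_ne hiew hix, Equiv.swap_apply_of_ne_of_ne hix hiw]
    calc (conj g e).toFun i = (conj g e).toFun (g i) := by rw [hgi]
      _ = i := by rw [toFun_conj_apply, hi, hgi]

theorem exists_mul_ofPerm_swap_eq_mul_conj (he : IsIdempotentElem e) (hw : e.toFun w ≠ w) (x : α) :
    ∃ g : Equiv.Perm α, e * ofPerm (Equiv.swap x w) = e * conj g e ∧ (conj g e).toFun x ≠ x := by
  by_cases hx : e.toFun x = x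
  · obtain ⟨g, hg⟩ := exists_conj_toFun_eq_swap hx hw
    refine ⟨g, ?_, ?_⟩
    · ext t
      exact (hg _ (toFun_toFun_of_isIdempotentElem he t)).symm
    · rw [hg x hx, Equiv.swap_apply_left]
      rintro rfl
      exact hw hx
  · refine ⟨1, ?_, hx⟩
    ext t
    have ht := toFun_toFun_of_isIdempotentElem he t
    have htx : e.toFun t ≠ x := fun h => hx (h ▸ ht)
    have htw : e.toFun t ≠ w := fun h => hw (h ▸ ht)
    simp [conj_apply, ht, Equiv.swap_apply_of_ne_of_ne htx htw]

theorem self_mul_ofPerm_swap_mem_genConj_of_toFun_right_ne (he : IsIdempotentElem e)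
    (hw : e.toFun w ≠ w) (x : α) :
    e * ofPerm (Equiv.swap x w) ∈ genConj ⊤ e := by
  obtain ⟨g, hg, -⟩ := exists_mul_ofPerm_swap_eq_mul_conj he hw x
  rw [hg]
  exact mul_mem self_mem_genConj (conj_mem_genConj (Subgroup.mem_top _) self_mem_genConj)

theorem self_mul_ofPerm_swap_mem_genConj (he : IsIdempotentElem e) (hw : e.toFun w ≠ w) (x y : α) :
    e * ofPerm (Equiv.swap x y) ∈ genConj ⊤ e := by
  rcases eq_or_ne x w with rfl | hxw
  · rw [Equiv.swap_comm]
    exact self_mul_ofPerm_swap_mem_genConj_of_toFun_right_ne he hw y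
  rcases eq_or_ne y w with rfl | hyw
  · exact self_mul_ofPerm_swap_mem_genConj_of_toFun_right_ne he hw x
  obtain ⟨g, hg, hx⟩ := exists_mul_ofPerm_swap_eq_mul_conj he hw x
  obtain ⟨h, hh, hy⟩ := exists_mul_ofPerm_swap_eq_mul_conj (he.map (conj g)) hx y
  have hswap : Equiv.swap x y = Equiv.swap y w * (Equiv.swap y x * Equiv.swap x w) := by
    rw [Equiv.mul_swap_eq_swap_mul, Equiv.swap_apply_right,
      Equiv.swap_apply_of_ne_of_ne hyw.symm hxw.symm, Equiv.swap_mul_self_mul, Equiv.swap_comm]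
  have hfirst : e * ofPerm (Equiv.swap x y) =
      e * (conj g e * (conj h (conj g e) * ofPerm (Equiv.swap y w))) := by
    rw [hswap, ofPerm_mul, ofPerm_mul, ← mul_assoc, ← mul_assoc, hg, mul_assoc e, hh]
    simp only [mul_assoc]
  have hlast :=
    self_mul_ofPerm_swap_mem_genConj_of_toFun_right_ne ((he.map (conj g)).map (conj h)) hy w
  rw [Equiv.swap_comm, conj_conj] at hlast
  rw [hfirst, conj_conj]
  exact mul_mem self_mem_genConj (mul_mem (conj_mem_genConj (Subgroup.mem_top _) self_mem_genConj)
    (genConj_le_genConj (conj_mem_genConj (Subgroup.mem_top _) self_mem_genConj) hlast))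

theorem mul_ofPerm_swap_mem_genConj (he : IsIdempotentElem e) (hw : e.toFun w ≠ w) (s t : α)
    {x : Transf α} (hx : x ∈ genConj ⊤ e) : x * ofPerm (Equiv.swap s t) ∈ genConj ⊤ e := by
  induction hx using Subsemigroup.closure_induction with
  | mem x hx =>
    obtain ⟨g, hg, rfl⟩ := hx
    have hgw : (conj g e).toFun (g w) ≠ g w := by simpa using hw
    exact genConj_le_genConj (conj_mem_genConj hg self_mem_genConj)
      (self_mul_ofPerm_swap_mem_genConj (he.map (conj g)) hgw s t)
  | mul x y hx _ _ hy =>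
    rw [mul_assoc]
    exact mul_mem hx hy

end Swap

section Perm

variable [Finite α] {e x : Transf α} {w : α}

theorem mul_ofPerm_mem_genConj (he : IsIdempotentElem e) (hw : e.toFun w ≠ w)
    (hx : x ∈ genConj ⊤ e) (p : Equiv.Perm α) : x * ofPerm p ∈ genConj ⊤ e := by
  classical
  induction p using Equiv.Perm.swap_induction_on with
  | one => exact hx
  | swap_mul p s t _ ih =>
    rw [ofPerm_mul, ← mul_assoc]
    exact mul_ofPerm_swap_mem_genConj he hw s t ih

theorem ofPerm_mul_mem_genConj (he : IsIdempotentElem e) (hw : e.toFun w ≠ w)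
    (hx : x ∈ genConj ⊤ e) (p : Equiv.Perm α) : ofPerm p * x ∈ genConj ⊤ e := by
  have hconj : conj p⁻¹ x * ofPerm p = ofPerm p * x := by
    rw [conj_apply, inv_inv]
    simpa using mul_ofPerm_mul_ofPerm_inv (ofPerm p * x) p⁻¹
  rw [← hconj]
  exact mul_ofPerm_mem_genConj he hw (conj_mem_genConj (Subgroup.mem_top _) hx) p

theorem exists_isIdempotentElem_genConj_eq {a : Transf α} (ha : ¬ Function.Bijective a.toFun) :
    ∃ e : Transf α, IsIdempotentElem e ∧ (∃ w, e.toFun w ≠ w) ∧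
      genConj ⊤ a = genConj ⊤ e := by
  obtain ⟨q, hq⟩ := exists_mul_ofPerm_mul_self (Set.toFinite (Set.range a.toFun))
  have he : IsIdempotentElem (a * ofPerm q) := by
    rw [IsIdempotentElem, ← mul_assoc, hq]
  have ha_eq : a * ofPerm q * ofPerm q⁻¹ = a := mul_ofPerm_mul_ofPerm_inv a q
  obtain ⟨w, hw⟩ : ∃ w, (a * ofPerm q).toFun w ≠ w := by
    by_contra! hfix
    have ha_inv : a.toFun = ⇑q⁻¹ := funext fun t => q.eq_symm_apply.2 (hfix t)
    exact ha (ha_inv ▸ q⁻¹.bijective)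
  refine ⟨a * ofPerm q, he, ⟨w, hw⟩, le_antisymm (genConj_le_genConj ?_) (genConj_le_genConj ?_)⟩
  · simpa only [ha_eq] using mul_ofPerm_mem_genConj he hw self_mem_genConj q⁻¹
  · simpa only [ha_eq] using
      mem_genConj_mul_ofPerm he (Subgroup.mem_top q⁻¹) (isOfFinOrder_of_finite q⁻¹)

end Perm

end Transf

theorem stmt5_general {α : Type*} [Finite α] (a : Transf α)
    (ha : ¬ Function.Bijective a.toFun) :
    IsIdemGen (genConj (⊤ : Subgroup (Equiv.Perm α)) a : Set (Transf α)) ∧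
    IsRegularSet (genConj (⊤ : Subgroup (Equiv.Perm α)) a : Set (Transf α)) := by
  obtain ⟨e, he, ⟨w, hw⟩, hae⟩ := Transf.exists_isIdempotentElem_genConj_eq ha
  rw [hae]
  exact ⟨Transf.isIdemGen_genConj he, Transf.isRegularSet_of_ofPerm_mul_mem
    (fun g _ hx => Transf.ofPerm_mul_mem_genConj he hw hx g)
    (fun g _ hx => Transf.mul_ofPerm_mem_genConj he hw hx g)⟩

theorem stmt5 (n : ℕ) (hn : 1 ≤ n) (a : Transf (Fin n))
    (ha : ¬ Function.Bijective a.toFun) :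
    IsIdemGen (genConj (⊤ : Subgroup (Equiv.Perm (Fin n))) a : Set (Transf (Fin n))) ∧
    IsRegularSet (genConj (⊤ : Subgroup (Equiv.Perm (Fin n))) a : Set (Transf (Fin n))) :=
  stmt5_general a ha
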